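/- arXiv:1504.04250 — 2 statements merged into one kernel-verified Lean document; each statement's English description precedes it below -/
import Mathlib

section
/- Let B_∞ be the infinite rooted binary tree (vertices: finite sequences of 0s and 1s, edges joining each vertex to its one-term extensions), with edge weight 2^{−n} on each edge joining a vertex of height n−1 to a vertex of height n, equipped with the resulting path metric. Then the edge coloring assigning a distinct color to every edge is a 1/4-strong coloring of B_∞, while B_∞ admits no κ-caterpillar coloring for any integer κ ≥ 1. -/
open Set Function Filter

open scoped ENNReal

attribute [local instance] Classical.propDecidable

noncomputable section

structure RootedWTree (V : Type*) where
  root : V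
  parent : V → V
  w : V → ℝ
  parent_root : parent root = root
  reach : ∀ v : V, ∃ n : ℕ, parent^[n] v = root
  w_pos : ∀ v : V, v ≠ root → 0 < w v

namespace RootedWTree

variable {V : Type*} (T : RootedWTree V)

def up (v : V) (n : ℕ) : V := T.parent^[n] v

def Anc (u v : V) : Prop := ∃ n : ℕ, T.up v n = u

lemma exists_anc (x y : V) : ∃ n : ℕ, T.Anc (T.up x n) y := by
  obtain ⟨n, hn⟩ := T.reach x
  obtain ⟨m, hm⟩ := T.reach y
  exact ⟨n, m, by simp only [up]; rw [hm, hn]⟩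

def climb (x y : V) : ℕ := Nat.find (T.exists_anc x y)

def rho (x y : V) : ℝ :=
  (∑ k ∈ Finset.range (T.climb x y), T.w (T.up x k)) +
  (∑ k ∈ Finset.range (T.climb y x), T.w (T.up y k))

def pathEdges (x y : V) : List V :=
  ((List.range (T.climb x y)).map (fun k => T.up x k)) ++
  ((List.range (T.climb y x)).map (fun k => T.up y k))

def MonotoneClass {C : Type*} (χ : V → C) (c : C) : Prop :=
  (∀ u v : V, u ≠ T.root → v ≠ T.root → χ u = c → χ v = c → T.Anc u v ∨ T.Anc v u) ∧
  (∀ (v : V) (n : ℕ), v ≠ T.root → χ v = c → T.up v n ≠ T.root → χ (T.up v n) = c →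
    ∀ k ≤ n, χ (T.up v k) = c)

def IsMonotoneColoring {C : Type*} (χ : V → C) : Prop := ∀ c : C, T.MonotoneClass χ c

def IsBranch (P : Set V) : Prop := IsMaxChain (fun u v => T.Anc u v) P

def IsCaterpillar {C : Type*} (χ : V → C) (κ : ℕ) : Prop :=
  T.IsMonotoneColoring χ ∧
  ∀ P : Set V, T.IsBranch P → ∃ s : Finset C, s.card ≤ κ ∧ ∀ v ∈ P, v ≠ T.root → χ v ∈ s

def colorLen {C : Type*} (χ : V → C) (c : C) (x y : V) : ℝ :=
  (((T.pathEdges x y).filter (fun e => decide (χ e = c))).map T.w).sum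

def IsStrong {C : Type*} (χ : V → C) (δ : ℝ) : Prop :=
  T.IsMonotoneColoring χ ∧
  ∀ x y : V, x ≠ y →
    T.rho x y / 2 ≤
      (((T.pathEdges x y).filter
        (fun e => decide (δ * T.rho x y ≤ T.colorLen χ (χ e) x y))).map T.w).sum

end RootedWTree
lemma tail_iterate_length (l : List Bool) : List.tail^[l.length] l = [] := by
  induction l with
  | nil => rfl
  | cons a l ih => simpa [Function.iterate_succ_apply] using ih

def binTree : RootedWTree (List Bool) where
  root := []
  parent := List.tail
  w v := (2 : ℝ)⁻¹ ^ v.length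
  parent_root := rfl
  reach v := ⟨v.length, tail_iterate_length v⟩
  w_pos v _ := by positivity

/-! Along every ascending path the edge lengths at least double, so the top edge of each of the two
ascents that make up the path from `x` to `y` carries at least half of that ascent, and a quarter of
the whole path: already the colors of these two edges witness strength, for any monotone coloring.

On the other hand, a color class is a chain, so it contains at most one of two siblings. Hence from
every vertex one can descend to a child whose color differs from the current one; the color classes
being convex, the ray obtained in this way never meets the same color twice. -/

namespace RootedWTree

variable {V C : Type*} {T : RootedWTree V} {u v x y e : V}

section Ancestors

lemma up_succ (v : V) (n : ℕ) : T.up v (n + 1) = T.up (T.parent v) n := rfl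

lemma up_succ' (v : V) (n : ℕ) : T.up v (n + 1) = T.parent (T.up v n) :=
  iterate_succ_apply' T.parent n v

lemma up_add (v : V) (m n : ℕ) : T.up v (m + n) = T.up (T.up v m) n := by
  rw [up, add_comm, iterate_add_apply]
  rfl

lemma up_root (n : ℕ) : T.up T.root n = T.root :=
  iterate_fixed T.parent_root n

lemma up_eq_root_of_le {m n : ℕ} (hmn : m ≤ n) (h : T.up v m = T.root) : T.up v n = T.root := by
  obtain ⟨k, rfl⟩ := Nat.exists_eq_add_of_le hmn
  rw [up_add, h, up_root]

lemma eq_root_of_up_eq_self {n : ℕ} (hn : n ≠ 0) (h : T.up v n = v) : v = T.root := by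
  obtain ⟨N, hN⟩ := T.reach v
  have hperiod : T.up v (N * n) = v := IsPeriodicPt.const_mul h N
  rw [← hperiod]
  exact up_eq_root_of_le (Nat.le_mul_of_pos_right N (Nat.pos_of_ne_zero hn)) hN

lemma up_ne_root_of_lt_climb {k : ℕ} (hk : k < T.climb x y) : T.up x k ≠ T.root := by
  intro hroot
  obtain ⟨n, hn⟩ := T.reach y
  exact Nat.find_min (T.exists_anc x y) hk ⟨n, hn.trans hroot.symm⟩

lemma exists_up_eq_up_climb (x y : V) :
    ∃ n, T.up y (T.climb y x + n) = T.up x (T.climb x y) := by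
  obtain ⟨m, hm⟩ : T.Anc (T.up x (T.climb x y)) y := Nat.find_spec (T.exists_anc x y)
  have hle : T.climb y x ≤ m := Nat.find_min' _ ⟨T.climb x y, hm.symm⟩
  exact ⟨m - T.climb y x, by rw [Nat.add_sub_cancel' hle, hm]⟩

lemma up_climb_comm (x y : V) : T.up x (T.climb x y) = T.up y (T.climb y x) := by
  obtain ⟨n, hn⟩ := T.exists_up_eq_up_climb x y
  obtain ⟨m, hm⟩ := T.exists_up_eq_up_climb y x
  rw [up_add] at hn hm
  rcases eq_or_ne n 0 with rfl | hn0
  · exact hn.symm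
  · have hcycle : T.up (T.up x (T.climb x y)) (m + n) = T.up x (T.climb x y) := by
      rw [up_add, hm, hn]
    have hroot : T.up x (T.climb x y) = T.root := eq_root_of_up_eq_self (by omega) hcycle
    rw [← hm, hroot, up_root]

end Ancestors

section Children

variable (T) in
/-- The children of a vertex. The root is excluded explicitly because it is its own parent. -/
def children (v : V) : Set V := {u | u ≠ T.root ∧ T.parent u = v}

lemma not_anc_of_mem_children {p : V} (hu : u ∈ T.children p) (hv : v ∈ T.children p)
    (huv : u ≠ v) : ¬ T.Anc u v := by
  rintro ⟨_ | n, hn⟩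
  · exact huv hn.symm
  · have hcycle : T.up u (n + 1) = u := by rwa [up_succ, hu.2, ← hv.2]
    exact hu.1 (eq_root_of_up_eq_self n.succ_ne_zero hcycle)

end Children

section Strong

lemma isMonotoneColoring_id : T.IsMonotoneColoring (fun v : V => v) := by
  refine fun c => ⟨fun u v _ _ hu hv => Or.inl ⟨0, hv.trans hu.symm⟩, ?_⟩
  intro v n hv hvc _ hnc k hk
  have hn : n = 0 := by
    by_contra hn
    exact hv (eq_root_of_up_eq_self hn (hnc.trans hvc.symm))
  obtain rfl : k = 0 := by omega
  exact hvc

/-- Weights that at least double from an edge to the one above it and agree on sibling edges, as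
the weights `2⁻ⁿ` on the edges at height `n` do. -/
structure IsHalving (T : RootedWTree V) : Prop where
  w_le_half : ∀ v, T.parent v ≠ T.root → T.w v ≤ T.w (T.parent v) / 2
  w_eq_of_mem_children : ∀ p, ∀ u ∈ T.children p, ∀ v ∈ T.children p, T.w u = T.w v

variable (T) in
/-- The edges met on the way from `x` up to the meet of `x` and `y`, in this order. -/
def ascent (x y : V) : List V := (List.range (T.climb x y)).map (T.up x)

lemma pathEdges_eq_ascent_append (x y : V) :
    T.pathEdges x y = T.ascent x y ++ T.ascent y x := rfl

lemma rho_eq_sum_ascent_add (x y : V) :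
    T.rho x y = ((T.ascent x y).map T.w).sum + ((T.ascent y x).map T.w).sum := by
  rw [ascent, ascent, List.map_map, List.map_map]
  rfl

lemma rho_comm (x y : V) : T.rho x y = T.rho y x := add_comm _ _

lemma up_mem_ascent {k : ℕ} (hk : k < T.climb x y) : T.up x k ∈ T.ascent x y :=
  List.mem_map_of_mem (List.mem_range.2 hk)

lemma ne_root_of_mem_ascent (he : e ∈ T.ascent x y) : e ≠ T.root := by
  obtain ⟨k, hk, rfl⟩ := List.mem_map.1 he
  exact up_ne_root_of_lt_climb (List.mem_range.1 hk)

lemma ne_root_of_mem_pathEdges (he : e ∈ T.pathEdges x y) : e ≠ T.root :=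
  (List.mem_append.1 he).elim ne_root_of_mem_ascent ne_root_of_mem_ascent

lemma w_le_sum_of_mem {l : List V} (hl : ∀ v ∈ l, v ≠ T.root) (he : e ∈ l) :
    T.w e ≤ (l.map T.w).sum := by
  refine List.single_le_sum (fun r hr => ?_) _ (List.mem_map_of_mem he)
  obtain ⟨v, hv, rfl⟩ := List.mem_map.1 hr
  exact (T.w_pos v (hl v hv)).le

lemma w_le_colorLen (χ : V → C) (he : e ∈ T.pathEdges x y) :
    T.w e ≤ T.colorLen χ (χ e) x y :=
  w_le_sum_of_mem (fun _ hv => ne_root_of_mem_pathEdges (List.mem_of_mem_filter hv))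
    (List.mem_filter.2 ⟨he, decide_eq_true rfl⟩)

namespace IsHalving

lemma sum_up_le (hT : T.IsHalving) (x : V) {n : ℕ} (hn : T.up x n ≠ T.root) :
    ∑ k ∈ Finset.range (n + 1), T.w (T.up x k) ≤ 2 * T.w (T.up x n) := by
  induction n with
  | zero =>
    rw [zero_add, Finset.sum_range_one, two_mul]
    exact le_add_of_nonneg_left (T.w_pos _ hn).le
  | succ n ih =>
    have hlower : ∑ k ∈ Finset.range (n + 1), T.w (T.up x k) ≤ 2 * T.w (T.up x n) :=
      ih fun h => hn (up_eq_root_of_le n.le_succ h)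
    have hdouble : T.w (T.up x n) ≤ T.w (T.up x (n + 1)) / 2 := by
      rw [up_succ'] at hn ⊢
      exact hT.w_le_half _ hn
    rw [Finset.sum_range_succ]
    linarith

lemma sum_ascent_le (hT : T.IsHalving) {k : ℕ} (hk : T.climb x y = k + 1) :
    ((T.ascent x y).map T.w).sum ≤ 2 * T.w (T.up x k) := by
  have hsum := hT.sum_up_le x (up_ne_root_of_lt_climb (y := y) (by omega : k < T.climb x y))
  rw [ascent, hk, List.map_map]
  exact hsum

lemma w_up_eq_w_up (hT : T.IsHalving) {j k : ℕ} (hj : T.climb x y = j + 1)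
    (hk : T.climb y x = k + 1) : T.w (T.up x j) = T.w (T.up y k) := by
  have hmeet : T.parent (T.up x j) = T.parent (T.up y k) := by
    simpa only [hj, hk, up_succ'] using T.up_climb_comm x y
  exact hT.w_eq_of_mem_children _ _ ⟨up_ne_root_of_lt_climb (y := y) (by omega), hmeet⟩
    _ ⟨up_ne_root_of_lt_climb (y := x) (by omega), rfl⟩

lemma rho_le (hT : T.IsHalving) {k : ℕ} (hk : T.climb x y = k + 1) :
    T.rho x y ≤ 4 * T.w (T.up x k) := by
  have hx := hT.sum_ascent_le hk
  have hy : ((T.ascent y x).map T.w).sum ≤ 2 * T.w (T.up x k) := by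
    rcases hj : T.climb y x with _ | j
    · have hpos := T.w_pos _ (up_ne_root_of_lt_climb (by omega : k < T.climb x y))
      simpa [ascent, hj] using hpos.le
    · rw [hT.w_up_eq_w_up hk hj]
      exact hT.sum_ascent_le hj
  rw [rho_eq_sum_ascent_add]
  linarith

lemma half_sum_ascent_le (hT : T.IsHalving) (p : V → Bool)
    (hp : ∀ k, T.climb x y = k + 1 → p (T.up x k)) :
    ((T.ascent x y).map T.w).sum / 2 ≤ (((T.ascent x y).filter p).map T.w).sum := by
  rcases hk : T.climb x y with _ | k
  · simp [ascent, hk]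
  · have htop : T.up x k ∈ (T.ascent x y).filter p :=
      List.mem_filter.2 ⟨up_mem_ascent (by omega), hp k hk⟩
    calc ((T.ascent x y).map T.w).sum / 2
        ≤ T.w (T.up x k) := by linarith [hT.sum_ascent_le hk]
      _ ≤ (((T.ascent x y).filter p).map T.w).sum :=
          w_le_sum_of_mem (fun _ hv => ne_root_of_mem_ascent (List.mem_of_mem_filter hv)) htop

theorem isStrong (hT : T.IsHalving) {χ : V → C} (hχ : T.IsMonotoneColoring χ) :
    T.IsStrong χ (1 / 4) := by
  refine ⟨hχ, fun x y _ => ?_⟩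
  set long : V → Bool := fun e => decide (1 / 4 * T.rho x y ≤ T.colorLen χ (χ e) x y)
  have long_of_rho_le {e : V} (he : e ∈ T.pathEdges x y) (hρ : T.rho x y ≤ 4 * T.w e) :
      long e := decide_eq_true (by linarith [w_le_colorLen χ he])
  have hx := hT.half_sum_ascent_le (x := x) (y := y) long fun k hk =>
    long_of_rho_le (List.mem_append_left _ (up_mem_ascent (by omega))) (hT.rho_le hk)
  have hy := hT.half_sum_ascent_le (x := y) (y := x) long fun k hk =>
    long_of_rho_le (List.mem_append_right _ (up_mem_ascent (by omega)))
      ((rho_comm x y).trans_le (hT.rho_le hk))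
  rw [pathEdges_eq_ascent_append, rho_eq_sum_ascent_add, List.filter_append, List.map_append,
    List.sum_append, add_div]
  exact add_le_add hx hy

end IsHalving

end Strong

section Caterpillar

/-- An infinite ray starting at the root, given by its successive vertices. -/
structure IsRay (T : RootedWTree V) (s : ℕ → V) : Prop where
  zero : s 0 = T.root
  succ_mem_children : ∀ n, s (n + 1) ∈ T.children (s n)

namespace IsRay

variable {s : ℕ → V}

lemma succ_ne_root (hs : T.IsRay s) (n : ℕ) : s (n + 1) ≠ T.root :=
  (hs.succ_mem_children n).1

lemma up_apply_add (hs : T.IsRay s) (n k : ℕ) : T.up (s (n + k)) k = s n := by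
  induction k with
  | zero => rfl
  | succ k ih =>
    rw [up_succ, ← add_assoc, (hs.succ_mem_children (n + k)).2, ih]

lemma up_mem_range (hs : T.IsRay s) (n k : ℕ) : T.up (s n) k ∈ range s := by
  rcases le_total k n with hkn | hnk
  · exact ⟨n - k, by simpa only [Nat.sub_add_cancel hkn] using (hs.up_apply_add (n - k) k).symm⟩
  · have hroot : T.up (s n) n = T.root := by
      simpa only [zero_add, hs.zero] using hs.up_apply_add 0 n
    exact ⟨0, by rw [up_eq_root_of_le hnk hroot, hs.zero]⟩

lemma not_anc_of_up_eq_root (hs : T.IsRay s) {n : ℕ} (hv : T.up v n = T.root) :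
    ¬ T.Anc (s (n + 1)) v := by
  rintro ⟨m, hm⟩
  have hmn : m ≤ n := by
    by_contra! hnm
    exact hs.succ_ne_root n (hm.symm.trans (up_eq_root_of_le hnm.le hv))
  obtain ⟨k, rfl⟩ := Nat.exists_eq_add_of_le hmn
  rw [up_add, hm, add_right_comm, hs.up_apply_add] at hv
  exact hs.succ_ne_root m hv

lemma isChain (hs : T.IsRay s) : IsChain T.Anc (range s) := by
  rintro _ ⟨i, rfl⟩ _ ⟨j, rfl⟩ _
  rcases le_total i j with h | h <;> obtain ⟨k, rfl⟩ := Nat.exists_eq_add_of_le h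
  · exact Or.inl ⟨k, hs.up_apply_add i k⟩
  · exact Or.inr ⟨k, hs.up_apply_add j k⟩

lemma isBranch (hs : T.IsRay s) : T.IsBranch (range s) := by
  refine ⟨hs.isChain, fun t ht hst => hst.antisymm fun v hv => ?_⟩
  obtain ⟨n, hn⟩ := T.reach v
  by_contra hvs
  rcases ht hv (hst ⟨n + 1, rfl⟩) (fun h => hvs ⟨n + 1, h.symm⟩) with ⟨k, hk⟩ | hanc
  · exact hvs (hk ▸ hs.up_mem_range (n + 1) k)
  · exact hs.not_anc_of_up_eq_root hn hanc

end IsRay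

namespace IsMonotoneColoring

variable {χ : V → C}

lemma exists_mem_children_ne (hχ : T.IsMonotoneColoring χ) (hv : (T.children v).Nontrivial)
    (c : C) : ∃ u ∈ T.children v, χ u ≠ c := by
  obtain ⟨a, ha, b, hb, hab⟩ := hv
  by_contra! hc
  rcases (hχ c).1 a b ha.1 hb.1 (hc a ha) (hc b hb) with h | h
  · exact not_anc_of_mem_children ha hb hab h
  · exact not_anc_of_mem_children hb ha hab.symm h

lemma exists_isRay_ne_succ (hχ : T.IsMonotoneColoring χ)
    (hT : ∀ v, (T.children v).Nontrivial) :
    ∃ s, T.IsRay s ∧ ∀ n, χ (s (n + 1)) ≠ χ (s n) := by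
  choose child hchild hne using fun v => hχ.exists_mem_children_ne (hT v) (χ v)
  have hray (n : ℕ) : child^[n + 1] T.root ∈ T.children (child^[n] T.root) := by
    rw [iterate_succ_apply']
    exact hchild _
  have hcolor (n : ℕ) : χ (child^[n + 1] T.root) ≠ χ (child^[n] T.root) := by
    rw [iterate_succ_apply']
    exact hne _
  exact ⟨fun n => child^[n] T.root, ⟨rfl, hray⟩, hcolor⟩

lemma injective_of_isRay (hχ : T.IsMonotoneColoring χ) {s : ℕ → V} (hs : T.IsRay s)
    (hne : ∀ n, χ (s (n + 1)) ≠ χ (s n)) : Injective fun n => χ (s (n + 1)) := by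
  refine Injective.of_lt_imp_ne fun i j hij heq => ?_
  obtain ⟨k, rfl⟩ := Nat.exists_eq_add_of_lt hij
  have hup : T.up (s (i + k + 1 + 1)) (k + 1) = s (i + 1) := by
    rw [← hs.up_apply_add (i + 1) (k + 1)]
    congr 2
    omega
  have hparent : χ (T.up (s (i + k + 1 + 1)) 1) = χ (s (i + 1)) :=
    (hχ _).2 _ (k + 1) (hs.succ_ne_root _) heq.symm (hup ▸ hs.succ_ne_root i)
      (congrArg χ hup) 1 (by omega)
  rw [hs.up_apply_add] at hparent
  exact hne _ (heq.symm.trans hparent.symm)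

theorem exists_isBranch_infinite_image (hχ : T.IsMonotoneColoring χ)
    (hT : ∀ v, (T.children v).Nontrivial) :
    ∃ P, T.IsBranch P ∧ (χ '' (P \ {T.root})).Infinite := by
  obtain ⟨s, hs, hne⟩ := hχ.exists_isRay_ne_succ hT
  refine ⟨range s, hs.isBranch,
    (infinite_range_of_injective (hχ.injective_of_isRay hs hne)).mono ?_⟩
  rintro _ ⟨n, rfl⟩
  exact mem_image_of_mem χ ⟨mem_range_self (n + 1), hs.succ_ne_root n⟩

end IsMonotoneColoring

theorem not_isCaterpillar (hT : ∀ v, (T.children v).Nontrivial) (χ : V → C) (κ : ℕ) :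
    ¬ T.IsCaterpillar χ κ := by
  rintro ⟨hχ, hfew⟩
  obtain ⟨P, hP, hinf⟩ := hχ.exists_isBranch_infinite_image hT
  obtain ⟨S, -, hS⟩ := hfew P hP
  refine hinf (S.finite_toSet.subset ?_)
  rintro _ ⟨v, ⟨hvP, hv⟩, rfl⟩
  exact hS v hvP hv

end Caterpillar

end RootedWTree

lemma cons_mem_children_binTree (b : Bool) (v : List Bool) : b :: v ∈ binTree.children v :=
  ⟨List.cons_ne_nil b v, rfl⟩

lemma children_binTree_nontrivial (v : List Bool) : (binTree.children v).Nontrivial :=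
  ⟨true :: v, cons_mem_children_binTree true v, false :: v, cons_mem_children_binTree false v,
    by simp⟩

lemma w_cons_binTree (b : Bool) (v : List Bool) : binTree.w (b :: v) = binTree.w v / 2 :=
  pow_succ (2 : ℝ)⁻¹ v.length

lemma isHalving_binTree : binTree.IsHalving where
  w_le_half
    | [], h => absurd rfl h
    | b :: v, _ => (w_cons_binTree b v).le
  w_eq_of_mem_children := by
    rintro p (_ | ⟨a, u⟩) ⟨hu, rfl⟩ (_ | ⟨b, v⟩) ⟨hv, hvu⟩
    · rfl
    · exact absurd rfl hu
    · exact absurd rfl hv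
    · change v = u at hvu
      rw [w_cons_binTree, w_cons_binTree, hvu]

theorem binTree_strong_not_caterpillar_general {V : Type*} {T : RootedWTree V}
    (hw : T.IsHalving) (hT : ∀ v, (T.children v).Nontrivial) :
    T.IsStrong (fun v : V => v) (1 / 4) ∧
    ∀ (C : Type*) (χ : V → C) (κ : ℕ), ¬ T.IsCaterpillar χ κ :=
  ⟨hw.isStrong RootedWTree.isMonotoneColoring_id,
    fun _ χ κ => RootedWTree.not_isCaterpillar hT χ κ⟩

/-- Proposition 3.7: on the infinite binary tree with weight
`2^{-n}` on edges at height `n`, the coloring assigning a distinct color to every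
edge is `1/4`-strong, while no coloring is `κ`-caterpillar for any `κ ≥ 1`. -/
theorem binTree_strong_not_caterpillar :
    binTree.IsStrong (fun v : List Bool => v) (1 / 4) ∧
    ∀ (C : Type) (χ : List Bool → C) (κ : ℕ), 1 ≤ κ → ¬ binTree.IsCaterpillar χ κ := by
  obtain ⟨hstrong, hnot⟩ :=
    binTree_strong_not_caterpillar_general isHalving_binTree children_binTree_nontrivial
  exact ⟨hstrong, fun C χ κ _ => hnot C χ κ⟩

end
end

section
/- Let X be a real Banach space admitting an equivalent norm with property (β). Then c₀ is not a uniform subquotient of X via a uniform quotient map that is Lipschitz for large distances; that is, there is no subset Z ⊆ X and surjective uniform quotient map f : Z → c₀ that is Lipschitz for large distances. -/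
open Set Function Filter

open scoped ENNReal

attribute [local instance] Classical.propDecidable

noncomputable section

def rolewiczSetN {Y : Type*} [AddCommGroup Y] (N : Y → ℝ) (t : ℝ) : Set ℝ :=
  {s | ∃ x : Y, N x ≤ 1 ∧ ∃ y : ℕ → Y, (∀ i, N (y i) ≤ 1) ∧
    (∀ n m : ℕ, n ≠ m → t ≤ N (y n - y m)) ∧ s = ⨅ i, N (x - y i) / 2}

def rolewiczModN {Y : Type*} [AddCommGroup Y] (N : Y → ℝ) (t : ℝ) : ℝ :=
  1 - sSup (rolewiczSetN N t)

def IsEquivNorm (Y : Type*) [SeminormedAddCommGroup Y] [NormedSpace ℝ Y] (N : Y → ℝ) : Prop :=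
  (∀ x y : Y, N (x + y) ≤ N x + N y) ∧ (∀ (c : ℝ) (x : Y), N (c • x) = |c| * N x) ∧
  ∃ a b : ℝ, 0 < a ∧ a ≤ b ∧ ∀ y : Y, a * ‖y‖ ≤ N y ∧ N y ≤ b * ‖y‖

def AdmitsBetaNorm (Y : Type*) [SeminormedAddCommGroup Y] [NormedSpace ℝ Y] : Prop :=
  ∃ N : Y → ℝ, IsEquivNorm Y N ∧ ∀ t : ℝ, 0 < t → t ≤ 2 → 0 < rolewiczModN N t

def AdmitsBetaPNorm (Y : Type*) [SeminormedAddCommGroup Y] [NormedSpace ℝ Y] (p γ : ℝ) : Prop :=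
  ∃ N : Y → ℝ, IsEquivNorm Y N ∧
    ∀ t : ℝ, 0 < t → t ≤ 2 → (rolewiczSetN N t).Nonempty → γ * t ^ p ≤ rolewiczModN N t
def UniformQuotientMap {α β : Type*} (dα : α → α → ℝ) (dβ : β → β → ℝ) (f : α → β) : Prop :=
  Function.Surjective f ∧
  ∃ ρ ω : ℝ → ℝ,
    (∀ s t : ℝ, 0 < s → s ≤ t → ρ s ≤ ρ t) ∧ (∀ s t : ℝ, 0 < s → s ≤ t → ω s ≤ ω t) ∧
    (∀ t : ℝ, 0 < t → 0 < ρ t) ∧ (∀ t : ℝ, 0 < t → 0 < ω t) ∧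
    Filter.Tendsto ω (nhdsWithin 0 (Set.Ioi (0:ℝ))) (nhds 0) ∧
    ∀ (x : α) (r : ℝ), 0 < r →
      (∀ y : β, dβ (f x) y ≤ ρ r → ∃ a : α, dα x a ≤ r ∧ f a = y) ∧
      (∀ a : α, dα x a ≤ r → dβ (f x) (f a) ≤ ω r)

def LipLargeDist {α β : Type*} (dα : α → α → ℝ) (dβ : β → β → ℝ) (f : α → β) : Prop :=
  ∀ s : ℝ, 0 < s → ∃ M : ℝ, ∀ a b : α, s ≤ dα a b → dβ (f a) (f b) ≤ M * dα a b

/-!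
In `c₀` the finite sequences of natural numbers index, at every scale `c`, a countably branching
tree whose edges have length at most `c`, and a descent of `m` steps, the first of them to a vertex
`w`, ends at distance at least `c * m` from everything outside the subtree at `w`. A uniform
quotient map lifts edges, and Lipschitz behaviour for large distances keeps the separation, so the
preimages of the vertices form such a tree in `X`.

Property (β) forbids this. Suppose that every vertex has, in each direction, descendants `2 ^ k`
levels below it at distance at most `D` in `X`. Prolonging such a descent in all possible
directions gives infinitely many points within `D` of the midpoint that are separated by a fixed
multiple of `D`, so (β) brings one of them within `2 * D * q` of the starting point, with a fixed
`q < 1`. Iterating, the average speed of a descent decays like `q ^ k`, whereas the separation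
bounds it below.
-/

open scoped ZeroAtInfty

section SeparatedTree

variable {α β : Type*} {dα : α → α → ℝ} {dβ : β → β → ℝ} {b δ : ℝ} {F : List ℕ → Set α}

/-- A separated tree: a tree indexed by the finite sequences of natural numbers, whose vertices
are realised by sets of points. The children of `s` are the sequences `n :: s`, so that the
ancestors of a vertex are its suffixes. Every point above `s` has a point above each child of `s`
within `b`, and the `u.length + 1` steps of a descent from `s` to `u ++ n :: s` are paid for at
rate `δ` by the distance to every point outside the subtree at `n :: s`. Sets, rather than points,
are needed so that the notion passes to preimages under quotient maps. -/
structure IsSeparatedTree (d : α → α → ℝ) (b δ : ℝ) (F : List ℕ → Set α) : Prop where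
  root_nonempty : (F []).Nonempty
  exists_child : ∀ {s x}, x ∈ F s → ∀ n, ∃ y ∈ F (n :: s), d x y ≤ b
  pos : 0 < δ
  separated : ∀ {s u v n x y}, ¬ (n :: s) <:+ v → x ∈ F v → y ∈ F (u ++ n :: s) →
    δ * (u.length + 1) ≤ d x y

theorem IsSeparatedTree.le_of_mem (hF : IsSeparatedTree dα b δ F) {s u v : List ℕ} {n : ℕ} {x y : α}
    (hv : ¬ (n :: s) <:+ v) (hx : x ∈ F v) (hy : y ∈ F (u ++ n :: s)) : δ ≤ dα x y :=
  (le_mul_of_one_le_right hF.pos.le (by simp)).trans (hF.separated hv hx hy)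

theorem IsSeparatedTree.image {g : α → β} {A B : ℝ} (hF : IsSeparatedTree dα b δ F)
    (hA : 0 < A) (hB : 0 ≤ B) (hle : ∀ x y, A * dα x y ≤ dβ (g x) (g y))
    (hge : ∀ x y, dβ (g x) (g y) ≤ B * dα x y) :
    IsSeparatedTree dβ (B * b) (A * δ) (fun s => g '' F s) where
  root_nonempty := hF.root_nonempty.image g
  exists_child := by
    rintro s _ ⟨x, hx, rfl⟩ n
    obtain ⟨y, hy, hxy⟩ := hF.exists_child hx n
    exact ⟨g y, mem_image_of_mem g hy, (hge x y).trans (mul_le_mul_of_nonneg_left hxy hB)⟩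
  pos := mul_pos hA hF.pos
  separated := by
    rintro s u v n _ _ hv ⟨x, hx, rfl⟩ ⟨y, hy, rfl⟩
    rw [mul_assoc]
    exact (mul_le_mul_of_nonneg_left (hF.separated hv hx hy) hA.le).trans (hle x y)

theorem IsSeparatedTree.preimage {G : List ℕ → Set β} {f : α → β} {r M : ℝ}
    (hG : IsSeparatedTree dβ b δ G) (hf : Surjective f)
    (hlift : ∀ x y, dβ (f x) y ≤ b → ∃ a, dα x a ≤ r ∧ f a = y)
    (hM : 0 < M) (hle : ∀ x y, δ ≤ dβ (f x) (f y) → dβ (f x) (f y) ≤ M * dα x y) :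
    IsSeparatedTree dα r (δ / M) (fun s => f ⁻¹' G s) where
  root_nonempty := hG.root_nonempty.preimage hf
  exists_child := by
    intro s x hx n
    obtain ⟨y, hy, hxy⟩ := hG.exists_child hx n
    obtain ⟨a, hxa, rfl⟩ := hlift x y hxy
    exact ⟨a, hy, hxa⟩
  pos := div_pos hG.pos hM
  separated := by
    intro s u v n x y hv hx hy
    rw [div_mul_eq_mul_div, div_le_iff₀' hM]
    exact (hG.separated hv hx hy).trans (hle x y (hG.le_of_mem hv hx hy))

/-- Every point above a vertex can reach, in each direction `n`, some descendant exactly `m`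
levels below at cost at most `D`. The remaining `m - 1` directions are not prescribed. -/
def HasDescents (d : α → α → ℝ) (F : List ℕ → Set α) (m : ℕ) (D : ℝ) : Prop :=
  ∀ s, ∀ x ∈ F s, ∀ n, ∃ u, u.length + 1 = m ∧ ∃ y ∈ F (u ++ n :: s), d x y ≤ D

theorem IsSeparatedTree.hasDescents_one (hF : IsSeparatedTree dα b δ F) : HasDescents dα F 1 b :=
  fun _ _ hx n => ⟨[], rfl, hF.exists_child hx n⟩

theorem IsSeparatedTree.mul_le_of_hasDescents (hF : IsSeparatedTree dα b δ F) {m : ℕ} {D : ℝ}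
    (hD : HasDescents dα F m D) : δ * m ≤ D := by
  obtain ⟨x, hx⟩ := hF.root_nonempty
  obtain ⟨u, rfl, y, hy, hxy⟩ := hD [] x hx 0
  rw [Nat.cast_add_one]
  exact (hF.separated (by simp) hx hy).trans hxy

theorem IsSeparatedTree.sep_le_step (hF : IsSeparatedTree dα b δ F) : δ ≤ b := by
  simpa using hF.mul_le_of_hasDescents hF.hasDescents_one

end SeparatedTree

section QuotientMap

variable {α β : Type*} {dα : α → α → ℝ} {dβ : β → β → ℝ} {f : α → β}

theorem LipLargeDist.exists_pos_le_mul (hf : LipLargeDist dα dβ f) {s c : ℝ} (hs : 0 < s)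
    (hsmall : ∀ x y, dα x y ≤ s → dβ (f x) (f y) < c) :
    ∃ M > 0, ∀ x y, c ≤ dβ (f x) (f y) → dβ (f x) (f y) ≤ M * dα x y := by
  obtain ⟨M, hM⟩ := hf s hs
  refine ⟨max M 1, lt_max_of_lt_right one_pos, fun x y hxy => ?_⟩
  have hlarge : s < dα x y := not_le.mp fun h => (hsmall x y h).not_ge hxy
  exact (hM x y hlarge.le).trans
    (mul_le_mul_of_nonneg_right (le_max_left M 1) (hs.trans hlarge).le)

theorem UniformQuotientMap.exists_isSeparatedTree_preimage (hf : UniformQuotientMap dα dβ f)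
    (hlip : LipLargeDist dα dβ f) {r : ℝ} (hr : 0 < r) :
    ∃ b > 0, ∀ δ F, IsSeparatedTree dβ b δ F →
      ∃ ε, IsSeparatedTree dα r ε (fun s => f ⁻¹' F s) := by
  obtain ⟨hsurj, ρ, ω, -, -, hρ, -, hω, hball⟩ := hf
  refine ⟨ρ r, hρ r hr, fun δ F hF => ?_⟩
  obtain ⟨s, hωs, hs⟩ : ∃ s, ω s < δ ∧ 0 < s :=
    ((hω.eventually (gt_mem_nhds hF.pos)).and self_mem_nhdsWithin).exists
  obtain ⟨M, hM, hle⟩ := hlip.exists_pos_le_mul hs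
    fun x y hxy => ((hball x s hs).2 y hxy).trans_lt hωs
  exact ⟨δ / M, hF.preimage hsurj (fun x => (hball x r hr).1) hM hle⟩

end QuotientMap

section PropertyBeta

section AddGroupSeminorm

variable {S Y : Type*} [AddCommGroup Y] [FunLike S Y ℝ] [AddGroupSeminormClass S Y ℝ] (p : S)

theorem rolewiczModN_le_one (t : ℝ) : rolewiczModN p t ≤ 1 := by
  refine sub_le_self 1 (Real.sSup_nonneg ?_)
  rintro _ ⟨x, -, y, -, -, rfl⟩
  exact Real.iInf_nonneg fun i => div_nonneg (apply_nonneg p _) zero_le_two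

theorem bddAbove_rolewiczSetN (t : ℝ) : BddAbove (rolewiczSetN p t) := by
  refine ⟨1, ?_⟩
  rintro _ ⟨x, hx, y, hy, -, rfl⟩
  have hbelow : BddBelow (range fun i => p (x - y i) / 2) :=
    ⟨0, forall_mem_range.mpr fun i => div_nonneg (apply_nonneg p _) zero_le_two⟩
  have htriangle : p (x - y 0) ≤ p x + p (y 0) := map_sub_le_add p x (y 0)
  exact (ciInf_le hbelow 0).trans (by linarith [hy 0])

theorem exists_lt_of_rolewiczModN_of_le_one {t q : ℝ} (hq : 1 - rolewiczModN p t < q) {x : Y}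
    {y : ℕ → Y} (hx : p x ≤ 1) (hy : ∀ i, p (y i) ≤ 1)
    (hsep : Pairwise fun i j => t ≤ p (y i - y j)) : ∃ i, p (x - y i) < 2 * q := by
  have hmem : ⨅ i, p (x - y i) / 2 ∈ rolewiczSetN p t := ⟨x, hx, y, hy, fun _ _ h => hsep h, rfl⟩
  have hlt : ⨅ i, p (x - y i) / 2 < q :=
    (le_csSup (bddAbove_rolewiczSetN p t) hmem).trans_lt
      (by rwa [rolewiczModN, sub_sub_cancel] at hq)
  obtain ⟨i, hi⟩ := exists_lt_of_ciInf_lt hlt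
  exact ⟨i, (div_lt_iff₀' zero_lt_two).mp hi⟩

end AddGroupSeminorm

variable {X : Type*} [AddCommGroup X] [Module ℝ X] {p : Seminorm ℝ X}

theorem exists_lt_of_rolewiczModN {t q D : ℝ} (hq : 1 - rolewiczModN p t < q) (hD : 0 < D)
    {x z : X} {y : ℕ → X} (hx : p (x - z) ≤ D) (hy : ∀ i, p (y i - z) ≤ D)
    (hsep : Pairwise fun i j => t * D ≤ p (y i - y j)) : ∃ i, p (x - y i) < 2 * D * q := by
  have hscale (v : X) : p (D⁻¹ • v) = p v / D := by
    rw [map_smul_eq_mul, Real.norm_of_nonneg (inv_nonneg.mpr hD.le), inv_mul_eq_div]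
  have hdiff (v w : X) : D⁻¹ • (v - z) - D⁻¹ • (w - z) = D⁻¹ • (v - w) := by
    rw [← smul_sub, sub_sub_sub_cancel_right]
  obtain ⟨i, hi⟩ := exists_lt_of_rolewiczModN_of_le_one p hq
    (x := D⁻¹ • (x - z)) (y := fun i => D⁻¹ • (y i - z))
    (by rwa [hscale, div_le_one hD]) (fun i => by rw [hscale, div_le_one hD]; exact hy i)
    (fun i j hij => by simpa only [hdiff, hscale, le_div_iff₀ hD] using hsep hij)
  rw [hdiff, hscale, div_lt_iff₀ hD] at hi
  exact ⟨i, hi.trans_eq (by ring)⟩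

variable {b δ : ℝ} {F : List ℕ → Set X}

theorem IsSeparatedTree.hasDescents_two_mul (hF : IsSeparatedTree (fun x y => p (x - y)) b δ F)
    {t q D : ℝ} {m : ℕ} (hq : 1 - rolewiczModN p t < q) (htD : t * D ≤ δ * m)
    (hD : HasDescents (fun x y => p (x - y)) F m D) :
    HasDescents (fun x y => p (x - y)) F (2 * m) (2 * D * q) := by
  intro s x hx n
  obtain ⟨u, hu, z, hz, hxz⟩ := hD s x hx n
  choose v hv y hy hzy using hD (u ++ n :: s) z hz
  have hD_pos : 0 < D := by
    have hm : (0 : ℝ) < m := by rw [← hu]; positivity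
    exact (mul_pos hF.pos hm).trans_le (hF.mul_le_of_hasDescents hD)
  have hsep : Pairwise fun i j => t * D ≤ p (y i - y j) := by
    intro i j hij
    have hdisjoint : ¬ (j :: (u ++ n :: s)) <:+ v i ++ i :: (u ++ n :: s) := fun h =>
      hij (List.cons.inj ((List.suffix_of_suffix_length_le h (List.suffix_append _ _)
        (by simp)).eq_of_length (by simp))).1.symm
    have hij_sep := hF.separated hdisjoint (hy i) (hy j)
    rw [← Nat.cast_add_one, hv j] at hij_sep
    exact htD.trans hij_sep
  obtain ⟨i, hi⟩ := exists_lt_of_rolewiczModN hq hD_pos hxz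
    (fun i => (map_sub_rev p (y i) z).trans_le (hzy i)) hsep
  refine ⟨v i ++ i :: u, ?_, y i, ?_, hi.le⟩
  · have := hv i
    simp only [List.length_append, List.length_cons]
    omega
  · simpa using hy i

theorem IsSeparatedTree.hasDescents_two_pow (hF : IsSeparatedTree (fun x y => p (x - y)) b δ F)
    {q : ℝ} (hq : 1 - rolewiczModN p (δ / b) < q) (hq_one : q ≤ 1) (k : ℕ) :
    HasDescents (fun x y => p (x - y)) F (2 ^ k) (2 ^ k * q ^ k * b) := by
  have hb : 0 < b := hF.pos.trans_le hF.sep_le_step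
  have hq_nonneg : 0 ≤ q := (sub_nonneg.mpr (rolewiczModN_le_one p _)).trans hq.le
  induction k with
  | zero => simpa using hF.hasDescents_one
  | succ k ih =>
    have hsep : δ / b * (2 ^ k * q ^ k * b) ≤ δ * (2 ^ k : ℕ) := calc
      δ / b * (2 ^ k * q ^ k * b) = δ * 2 ^ k * q ^ k := by field_simp
      _ ≤ δ * 2 ^ k := mul_le_of_le_one_right (mul_pos hF.pos (by positivity)).le
        (pow_le_one₀ hq_nonneg hq_one)
      _ = δ * (2 ^ k : ℕ) := by norm_cast
    convert hF.hasDescents_two_mul hq hsep ih using 1 <;> ring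

theorem not_isSeparatedTree_of_rolewiczModN_pos
    (hβ : ∀ t : ℝ, 0 < t → t ≤ 2 → 0 < rolewiczModN p t) :
    ¬ IsSeparatedTree (fun x y => p (x - y)) b δ F := by
  intro hF
  have hb : 0 < b := hF.pos.trans_le hF.sep_le_step
  have hrate : 0 < δ / b := div_pos hF.pos hb
  have hrate_le : δ / b ≤ 2 := ((div_le_one hb).mpr hF.sep_le_step).trans one_le_two
  obtain ⟨q, hq, hq_one⟩ := exists_between (sub_lt_self (1 : ℝ) (hβ (δ / b) hrate hrate_le))
  obtain ⟨k, hk⟩ := exists_pow_lt_of_lt_one hrate hq_one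
  have hlower : δ * (2 ^ k : ℕ) ≤ 2 ^ k * q ^ k * b :=
    hF.mul_le_of_hasDescents (hF.hasDescents_two_pow hq hq_one.le k)
  have hupper : 2 ^ k * q ^ k * b < δ * (2 ^ k : ℕ) := calc
    2 ^ k * q ^ k * b = 2 ^ k * (q ^ k * b) := mul_assoc _ _ _
    _ < 2 ^ k * δ := mul_lt_mul_of_pos_left ((lt_div_iff₀ hb).mp hk) (by positivity)
    _ = δ * (2 ^ k : ℕ) := by rw [Nat.cast_pow, Nat.cast_ofNat, mul_comm]
  exact hupper.not_ge hlower

end PropertyBeta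

theorem AdmitsBetaNorm.exists_seminorm {X : Type*} [SeminormedAddCommGroup X] [NormedSpace ℝ X]
    (hX : AdmitsBetaNorm X) :
    ∃ (p : Seminorm ℝ X) (a b : ℝ), 0 < a ∧ 0 < b ∧ (∀ x, a * ‖x‖ ≤ p x) ∧ (∀ x, p x ≤ b * ‖x‖) ∧
      ∀ t : ℝ, 0 < t → t ≤ 2 → 0 < rolewiczModN p t := by
  obtain ⟨N, ⟨hadd, hsmul, a, b, ha, hab, hN⟩, hβ⟩ := hX
  exact ⟨Seminorm.of N hadd hsmul, a, b, ha, ha.trans_le hab, fun x => (hN x).1, fun x => (hN x).2,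
    hβ⟩

section TreeInC0

/-- The indicator function of a finite subset of a discrete space, as an element of `c₀`. -/
def finsetIndicator {ι : Type*} [TopologicalSpace ι] [DiscreteTopology ι] (A : Finset ι) :
    C₀(ι, ℝ) where
  toFun := (A : Set ι).indicator 1
  continuous_toFun := continuous_of_discreteTopology
  zero_at_infty' := by
    rw [cocompact_eq_cofinite]
    refine tendsto_const_nhds.congr' ?_
    filter_upwards [A.finite_toSet.compl_mem_cofinite] with i hi
    exact (indicator_of_notMem hi 1).symm

theorem finsetIndicator_apply {ι : Type*} [TopologicalSpace ι] [DiscreteTopology ι] (A : Finset ι)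
    (i : ι) : finsetIndicator A i = (A : Set ι).indicator 1 i :=
  rfl

theorem norm_finsetIndicator_le_one {ι : Type*} [TopologicalSpace ι] [DiscreteTopology ι]
    (A : Finset ι) : ‖finsetIndicator A‖ ≤ 1 := by
  rw [← ZeroAtInftyContinuousMap.norm_toBCF_eq_norm]
  refine (BoundedContinuousFunction.norm_le zero_le_one).mpr fun i => ?_
  exact (norm_indicator_le_norm_self 1 i).trans_eq norm_one

/-- The indicator function of the ancestors of `s`, including `s` itself, where vertices of the
tree serve as coordinates of `c₀` through `Encodable.encode`. -/
def branchIndicator (s : List ℕ) : C₀(ℕ, ℝ) :=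
  finsetIndicator (s.tails.toFinset.image Encodable.encode)

theorem branchIndicator_apply_of_suffix {σ s : List ℕ} (h : σ <:+ s) :
    branchIndicator s (Encodable.encode σ) = 1 := by
  simp [branchIndicator, finsetIndicator_apply, h]

theorem branchIndicator_apply_of_not_suffix {σ s : List ℕ} (h : ¬ σ <:+ s) :
    branchIndicator s (Encodable.encode σ) = 0 := by
  simp [branchIndicator, finsetIndicator_apply, h]

/-- The embedding of the countably branching tree into `c₀` that sums the branch indicators of
the nonempty suffixes of a sequence. -/
def treePoint : List ℕ → C₀(ℕ, ℝ)
  | [] => 0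
  | n :: s => treePoint s + branchIndicator (n :: s)

theorem dist_treePoint_cons_le (n : ℕ) (s : List ℕ) :
    dist (treePoint s) (treePoint (n :: s)) ≤ 1 := by
  rw [treePoint, dist_self_add_right]
  exact norm_finsetIndicator_le_one _

theorem treePoint_apply_of_not_suffix {σ v : List ℕ} (h : ¬ σ <:+ v) :
    treePoint v (Encodable.encode σ) = 0 := by
  induction v with
  | nil => rfl
  | cons n v ih =>
    rw [treePoint, ZeroAtInftyContinuousMap.add_apply, branchIndicator_apply_of_not_suffix h,
      ih fun hv => h (hv.trans (List.suffix_cons n v)), add_zero]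

theorem treePoint_append_cons_apply (u s : List ℕ) (n : ℕ) :
    treePoint (u ++ n :: s) (Encodable.encode (n :: s)) = u.length + 1 := by
  induction u with
  | nil =>
    have hnot : ¬ (n :: s) <:+ s := fun h => by simpa using h.length_le
    rw [List.nil_append, treePoint, ZeroAtInftyContinuousMap.add_apply,
      treePoint_apply_of_not_suffix hnot, branchIndicator_apply_of_suffix List.suffix_rfl,
      List.length_nil, Nat.cast_zero]
  | cons m u ih =>
    have hsuffix : (n :: s) <:+ m :: (u ++ n :: s) := List.suffix_append (m :: u) (n :: s)
    rw [List.cons_append, treePoint, ZeroAtInftyContinuousMap.add_apply, ih,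
      branchIndicator_apply_of_suffix hsuffix, List.length_cons, Nat.cast_add_one]

theorem isSeparatedTree_treePoint : IsSeparatedTree dist 1 1 (fun s => {treePoint s}) where
  root_nonempty := singleton_nonempty _
  exists_child := by
    rintro s _ rfl n
    exact ⟨_, rfl, dist_treePoint_cons_le n s⟩
  pos := one_pos
  separated := by
    rintro s u v n _ _ hv rfl rfl
    have hcoord := BoundedContinuousFunction.dist_coe_le_dist (f := (treePoint v).toBCF)
      (g := (treePoint (u ++ n :: s)).toBCF) (Encodable.encode (n :: s))
    calc 1 * ((u.length : ℝ) + 1)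
        = dist (treePoint v (Encodable.encode (n :: s)))
            (treePoint (u ++ n :: s) (Encodable.encode (n :: s))) := by
          rw [treePoint_apply_of_not_suffix hv, treePoint_append_cons_apply, dist_zero_left,
            Real.norm_of_nonneg (by positivity), one_mul]
      _ ≤ dist (treePoint v) (treePoint (u ++ n :: s)) := hcoord

theorem exists_isSeparatedTree_zeroAtInfty {c : ℝ} (hc : 0 < c) :
    ∃ F : List ℕ → Set C₀(ℕ, ℝ), IsSeparatedTree dist c c F := by
  have hdist (x y : C₀(ℕ, ℝ)) : dist (c • x) (c • y) = c * dist x y :=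
    (dist_smul₀ c x y).trans (by rw [Real.norm_of_nonneg hc.le])
  have hF := isSeparatedTree_treePoint.image (dβ := dist) (g := fun x => c • x) hc hc.le
    (fun x y => (hdist x y).ge) (fun x y => (hdist x y).le)
  rw [mul_one] at hF
  exact ⟨_, hF⟩

end TreeInC0

theorem c0_not_uniform_subquotient_general {X : Type*} [SeminormedAddCommGroup X]
    [NormedSpace ℝ X] (hX : AdmitsBetaNorm X) :
    ¬ ∃ (Z : Set X) (f : Z → C₀(ℕ, ℝ)),
      UniformQuotientMap (fun a b : Z => dist a.1 b.1) (fun a b : C₀(ℕ, ℝ) => dist a b) f ∧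
      LipLargeDist (fun a b : Z => dist a.1 b.1) (fun a b : C₀(ℕ, ℝ) => dist a b) f := by
  rintro ⟨Z, f, hf, hlip⟩
  obtain ⟨p, a, b, ha, hb, hap, hpb, hβ⟩ := hX.exists_seminorm
  obtain ⟨c, hc, hpreimage⟩ := hf.exists_isSeparatedTree_preimage hlip one_pos
  obtain ⟨F, hF⟩ := exists_isSeparatedTree_zeroAtInfty hc
  obtain ⟨ε, hFZ⟩ := hpreimage c F hF
  have hFX := hFZ.image (dβ := fun x y => p (x - y)) (g := Subtype.val) ha hb.le
    (fun x y => by rw [dist_eq_norm]; exact hap _) (fun x y => by rw [dist_eq_norm]; exact hpb _)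
  exact not_isSeparatedTree_of_rolewiczModN_pos hβ hFX

/-- Theorem 4.12: `c₀` is not a uniform subquotient, via a uniform
quotient map that is Lipschitz for large distances, of any Banach space admitting
an equivalent norm with property (β). -/
theorem c0_not_uniform_subquotient
    (X : Type*) [NormedAddCommGroup X] [NormedSpace ℝ X] [CompleteSpace X]
    (hX : AdmitsBetaNorm X) :
    ¬ ∃ (Z : Set X) (f : Z → ZeroAtInftyContinuousMap ℕ ℝ),
      UniformQuotientMap (fun a b : Z => dist a.1 b.1)
        (fun a b : ZeroAtInftyContinuousMap ℕ ℝ => dist a b) f ∧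
      LipLargeDist (fun a b : Z => dist a.1 b.1)
        (fun a b : ZeroAtInftyContinuousMap ℕ ℝ => dist a b) f := by
  exact c0_not_uniform_subquotient_general hX

end
end
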